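/- Let n∈ℕ, p ≥ 1, 0 < s_o ≤ s < 1 and γ∈(0,1]. Then there exists a constant c = c(n,s_o,p,γ) ≥ 1 such that for every R>0 and every measurable u:ℝⁿ→ℝ with u∈L^p(B_R) and with [u]_{W^{s,p}(B_R)}<∞ that satisfies u = 0 a.e. on a measurable set Ω_o ⊂ B_R with |Ω_o| ≥ γ|B_R|, one has ∫_{B_R} |u(x)|^p dx ≤ c (1−s) R^{sp} ∬_{B_R×B_R} |u(x)−u(y)|^p/|x−y|^{n+sp} dx dy. -/

import Mathlib

open MeasureTheory Metric Set
open scoped ENNReal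

noncomputable section

/-- Double Gagliardo integral `∬_{D×D} |u(x)-u(y)|^p / |x-y|^{n+sp} dx dy` in `ℝ≥0∞`. -/
def gagliardoE (n : ℕ) (s p : ℝ) (D : Set (EuclideanSpace ℝ (Fin n)))
    (u : EuclideanSpace ℝ (Fin n) → ℝ) : ℝ≥0∞ :=
  ∫⁻ x in D, ∫⁻ y in D, ENNReal.ofReal (|u x - u y| ^ p / dist x y ^ ((n : ℝ) + s * p))

/-- Nonlocal tail `Tail(u; B_R(x₀))` in `ℝ≥0∞`. -/
def tailE (n : ℕ) (s p : ℝ) (u : EuclideanSpace ℝ (Fin n) → ℝ)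
    (x₀ : EuclideanSpace ℝ (Fin n)) (R : ℝ) : ℝ≥0∞ :=
  (ENNReal.ofReal (R ^ (s * p)) *
      ∫⁻ x in (ball x₀ R)ᶜ,
        ENNReal.ofReal (|u x| ^ (p - 1) / dist x x₀ ^ ((n : ℝ) + s * p))) ^ (1 / (p - 1))

/-- `f ∈ L^q_loc(D)`. -/
def MemLploc (n : ℕ) (q : ℝ) (D : Set (EuclideanSpace ℝ (Fin n)))
    (f : EuclideanSpace ℝ (Fin n) → ℝ) : Prop :=
  Measurable f ∧
    ∀ K : Set (EuclideanSpace ℝ (Fin n)), K ⊆ D → IsCompact K →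
      (∫⁻ x in K, ENNReal.ofReal (|f x| ^ q)) < ⊤

/-- `u` is a local weak solution of `(-Δ_p)^s u = f` in `D`. -/
def IsLocalWeakSolution (n : ℕ) (p s : ℝ) (D : Set (EuclideanSpace ℝ (Fin n)))
    (f u : EuclideanSpace ℝ (Fin n) → ℝ) : Prop :=
  Measurable u ∧
  (∀ K : Set (EuclideanSpace ℝ (Fin n)), K ⊆ D → IsCompact K →
      (∫⁻ x in K, ENNReal.ofReal (|u x| ^ p)) < ⊤ ∧ gagliardoE n s p K u < ⊤) ∧
  (∫⁻ x, ENNReal.ofReal (|u x| ^ (p - 1) / (1 + ‖x‖) ^ ((n : ℝ) + s * p))) < ⊤ ∧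
  ∀ φ : EuclideanSpace ℝ (Fin n) → ℝ, Measurable φ →
    (∃ K : Set (EuclideanSpace ℝ (Fin n)), IsCompact K ∧ K ⊆ D ∧
      ∀ᵐ x, x ∉ K → φ x = 0) →
    (∫⁻ x, ENNReal.ofReal (|φ x| ^ p)) < ⊤ →
    gagliardoE n s p Set.univ φ < ⊤ →
    (∫ x, ∫ y,
        |u x - u y| ^ (p - 2) * (u x - u y) * (φ x - φ y) / dist x y ^ ((n : ℝ) + s * p)) =
      ∫ x in D, f x * φ x

/-- The signed `γ`-power `𝐚^γ = |a|^{γ-1} a`. -/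
def sgnPow (γ a : ℝ) : ℝ := |a| ^ (γ - 1) * a

/-!
Let `T r` be the sum of `|u x - u y| ^ p` over the pairs in the ball `B` at distance at most `r`.
Keeping only the pairs with `y` in the zero set `Ω` gives `|Ω| ∫_B |u| ^ p ≤ T (2R)`. Going from `x`
to `y` through their midpoint, which stays in `B` by convexity, gives `T r ≤ 2 ^ (n + p) T (r / 2)`,
hence `T r ≤ 2 ^ (k (n + p)) T (r / 2 ^ k)` for all `k`. Multiply by `2 ^ (-k (1 - s) p)` and sum
over `k`. The left-hand side becomes `T r / (1 - 2 ^ (-(1 - s) p))`, which is where the factor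
`1 - s` comes from. On the right-hand side, each pair `x, y` is weighted by a geometric sum of the
powers `2 ^ (k (n + s p)) ≤ (r / |x - y|) ^ (n + s p)`, so that the double integral is at most
`2 r ^ (n + s p)` times the Gagliardo energy.
-/

lemma one_sub_two_rpow_neg_le {t : ℝ} (ht : 0 ≤ t) :
    1 - (2 : ℝ≥0∞) ^ (-t) ≤ ENNReal.ofReal t := by
  have h_real : 1 ≤ (2 : ℝ) ^ (-t) + t := by
    have h_exp := Real.add_one_le_exp (Real.log 2 * -t)
    rw [← Real.rpow_def_of_pos two_pos] at h_exp
    have h_log : Real.log 2 * t ≤ t :=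
      mul_le_of_le_one_left ht (by linarith [Real.log_two_lt_d9])
    linarith
  rw [tsub_le_iff_left, ← ENNReal.ofReal_one, ← ENNReal.ofReal_ofNat,
    ENNReal.ofReal_rpow_of_pos two_pos, ← ENNReal.ofReal_add (by positivity) ht]
  exact ENNReal.ofReal_le_ofReal h_real

lemma sum_range_pow_le_pow {A : Type*} [Semiring A] [PartialOrder A] [IsOrderedRing A]
    [CanonicallyOrderedAdd A] {b : A} (hb : 2 ≤ b) (N : ℕ) :
    ∑ k ∈ Finset.range N, b ^ k ≤ b ^ N := by
  induction N with
  | zero => simp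
  | succ N ih =>
    calc ∑ k ∈ Finset.range (N + 1), b ^ k ≤ b ^ N + b ^ N := by
          rw [Finset.sum_range_succ]; gcongr
      _ = b ^ N * 2 := (mul_two _).symm
      _ ≤ b ^ (N + 1) := by rw [pow_succ]; gcongr

lemma sum_pow_le_two_mul {A : Type*} [Semiring A] [PartialOrder A] [IsOrderedRing A]
    [CanonicallyOrderedAdd A] {b X : A} (hb : 2 ≤ b) {t : Finset ℕ} (ht : ∀ k ∈ t, b ^ k ≤ X) :
    ∑ k ∈ t, b ^ k ≤ 2 * X := by
  rcases t.eq_empty_or_nonempty with rfl | hne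
  · simp
  have h_sub : t ⊆ Finset.range (t.max' hne + 1) := fun k hk ↦
    Finset.mem_range_succ_iff.2 (t.le_max' k hk)
  calc ∑ k ∈ t, b ^ k ≤ ∑ k ∈ Finset.range (t.max' hne + 1), b ^ k :=
        Finset.sum_le_sum_of_subset h_sub
    _ ≤ b ^ t.max' hne + b ^ t.max' hne := by
        rw [Finset.sum_range_succ]
        gcongr
        exact sum_range_pow_le_pow hb _
    _ ≤ 2 * X := by
        rw [← two_mul]
        gcongr
        exact ht _ (t.max'_mem hne)

lemma edist_left_midpoint {V P : Type*} [SeminormedAddCommGroup V] [NormedSpace ℝ V]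
    [PseudoMetricSpace P] [NormedAddTorsor V P] (x y : P) :
    edist x (midpoint ℝ x y) = edist x y / 2 := by
  rw [edist_nndist, nndist_left_midpoint, edist_nndist, ENNReal.div_eq_inv_mul]
  simp

lemma ediam_ball_le {X : Type*} [PseudoMetricSpace X] (x : X) (R : ℝ) :
    ediam (ball x R) ≤ ENNReal.ofReal (2 * R) := by
  rw [← eball_ofReal, ENNReal.ofReal_mul zero_le_two, ENNReal.ofReal_ofNat]
  exact ediam_eball_le

lemma two_mul_ediam_ball_rpow_le {X : Type*} [PseudoMetricSpace X] (x : X) {R : ℝ} (hR : 0 < R)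
    (n : ℕ) {p s : ℝ} (hp : 0 ≤ p) (hs : 0 ≤ s) (hs1 : s ≤ 1) :
    2 * ediam (ball x R) ^ (n + s * p) ≤
      ENNReal.ofReal (2 ^ (n + p + 1) * R ^ n * R ^ (s * p)) := by
  have h_real : 2 * (2 * R) ^ (n + s * p) ≤ 2 ^ (n + p + 1) * R ^ n * R ^ (s * p) := by
    calc 2 * (2 * R) ^ (n + s * p) = 2 ^ (n + s * p + 1) * R ^ n * R ^ (s * p) := by
          rw [Real.mul_rpow zero_le_two hR.le, Real.rpow_add hR, Real.rpow_natCast,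
            Real.rpow_add_one two_ne_zero]
          ring
      _ ≤ 2 ^ (n + p + 1) * R ^ n * R ^ (s * p) := by
          gcongr
          · exact one_le_two
          · exact mul_le_of_le_one_left hp hs1
  calc 2 * ediam (ball x R) ^ (n + s * p)
      ≤ 2 * ENNReal.ofReal (2 * R) ^ (n + s * p) := by
        gcongr
        exact ediam_ball_le x R
    _ = ENNReal.ofReal (2 * (2 * R) ^ (n + s * p)) := by
        rw [ENNReal.ofReal_rpow_of_pos (by positivity), ENNReal.ofReal_mul zero_le_two,
          ENNReal.ofReal_ofNat]
    _ ≤ ENNReal.ofReal (2 ^ (n + p + 1) * R ^ n * R ^ (s * p)) := ENNReal.ofReal_le_ofReal h_real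

section Midpoint

variable {E : Type*} [NormedAddCommGroup E] [NormedSpace ℝ E] [FiniteDimensional ℝ E]
  [MeasurableSpace E] [BorelSpace E] {μ : Measure E} [μ.IsAddHaarMeasure] {D : Set E}

lemma lintegral_comp_midpoint (f : E → ℝ≥0∞) (x : E) :
    ∫⁻ y, f (midpoint ℝ x y) ∂μ = 2 ^ Module.finrank ℝ E * ∫⁻ y, f y ∂μ := by
  have h_emb : MeasurableEmbedding ((2⁻¹ : ℝ) • · : E → E) :=
    measurableEmbedding_const_smul₀ (by norm_num)
  simp only [midpoint_eq_smul_add, invOf_eq_inv]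
  rw [lintegral_add_left_eq_self fun y ↦ f ((2⁻¹ : ℝ) • y), ← h_emb.lintegral_map,
    Measure.map_addHaar_smul μ (by norm_num), lintegral_smul_measure, smul_eq_mul]
  congr 1
  simp [ENNReal.ofReal_pow]

lemma setLIntegral_comp_midpoint_le (hD : MeasurableSet D) (hD_conv : Convex ℝ D)
    (f : E → ℝ≥0∞) {x : E} (hx : x ∈ D) :
    ∫⁻ y in D, f (midpoint ℝ x y) ∂μ ≤ 2 ^ Module.finrank ℝ E * ∫⁻ y in D, f y ∂μ := by
  rw [← lintegral_indicator hD, ← lintegral_indicator hD, ← lintegral_comp_midpoint _ x]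
  refine lintegral_mono fun y ↦ indicator_apply_le' (fun hy ↦ ?_) fun _ ↦ bot_le
  rw [indicator_of_mem (hD_conv.midpoint_mem hx hy)]

lemma setLIntegral_midpoint_add_le (hD : MeasurableSet D) (hD_conv : Convex ℝ D)
    {K : E → E → ℝ≥0∞} (hK : Measurable fun z : E × E ↦ K z.1 z.2) :
    ∫⁻ x in D, ∫⁻ y in D, (K x (midpoint ℝ x y) + K y (midpoint ℝ x y)) ∂μ ∂μ ≤
      2 ^ (Module.finrank ℝ E + 1) * ∫⁻ x in D, ∫⁻ y in D, K x y ∂μ ∂μ := by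
  have h_mid : Measurable fun z : E × E ↦ midpoint ℝ z.1 z.2 := by
    simp only [midpoint_eq_smul_add]
    fun_prop
  have hK_left : Measurable fun z : E × E ↦ K z.1 (midpoint ℝ z.1 z.2) :=
    hK.comp (measurable_fst.prodMk h_mid)
  have hK_right : Measurable fun z : E × E ↦ K z.2 (midpoint ℝ z.1 z.2) :=
    hK.comp (measurable_snd.prodMk h_mid)
  have h_left : ∫⁻ x in D, ∫⁻ y in D, K x (midpoint ℝ x y) ∂μ ∂μ ≤
      2 ^ Module.finrank ℝ E * ∫⁻ x in D, ∫⁻ y in D, K x y ∂μ ∂μ := by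
    rw [← lintegral_const_mul' _ _ (by finiteness)]
    exact setLIntegral_mono' hD fun x hx ↦ setLIntegral_comp_midpoint_le hD hD_conv _ hx
  have h_right : ∫⁻ x in D, ∫⁻ y in D, K y (midpoint ℝ x y) ∂μ ∂μ =
      ∫⁻ x in D, ∫⁻ y in D, K x (midpoint ℝ x y) ∂μ ∂μ := by
    rw [lintegral_lintegral_swap hK_right.aemeasurable]
    simp only [midpoint_comm]
  calc ∫⁻ x in D, ∫⁻ y in D, (K x (midpoint ℝ x y) + K y (midpoint ℝ x y)) ∂μ ∂μ
      = ∫⁻ x in D, ∫⁻ y in D, K x (midpoint ℝ x y) ∂μ ∂μ +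
          ∫⁻ x in D, ∫⁻ y in D, K y (midpoint ℝ x y) ∂μ ∂μ := by
        rw [← lintegral_add_left hK_left.lintegral_prod_right']
        exact lintegral_congr fun x ↦ lintegral_add_left (hK_left.comp measurable_prodMk_left) _
    _ ≤ 2 * (2 ^ Module.finrank ℝ E * ∫⁻ x in D, ∫⁻ y in D, K x y ∂μ ∂μ) := by
        rw [h_right, ← two_mul]
        gcongr
    _ = 2 ^ (Module.finrank ℝ E + 1) * ∫⁻ x in D, ∫⁻ y in D, K x y ∂μ ∂μ := by ring

end Midpoint

section TruncatedEnergy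

variable {X F : Type*} [PseudoEMetricSpace X] [PseudoEMetricSpace F]

/-- The integrand of `truncatedEnergy`: that of the Gagliardo energy of `u`, with the singular
weight replaced by the cut-off `edist x y ≤ r`. -/
def truncatedDiff (p : ℝ) (u : X → F) (r : ℝ≥0∞) (x y : X) : ℝ≥0∞ :=
  if edist x y ≤ r then edist (u x) (u y) ^ p else 0

/-- The non-singular energy of `u` at scale `r`, to which the Gagliardo energy is compared: the
`p`-th powers of the differences of `u`, integrated over the pairs of points of `D` at distance at
most `r`. -/
def truncatedEnergy [MeasurableSpace X] (μ : Measure X) (p : ℝ) (D : Set X) (u : X → F)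
    (r : ℝ≥0∞) : ℝ≥0∞ :=
  ∫⁻ x in D, ∫⁻ y in D, truncatedDiff p u r x y ∂μ ∂μ

variable [MeasurableSpace X]

lemma measurable_truncatedDiff [OpensMeasurableSpace X] [SecondCountableTopology X] (p : ℝ)
    {u : X → F} (hu : StronglyMeasurable u) (r : ℝ≥0∞) :
    Measurable fun z : X × X ↦ truncatedDiff p u r z.1 z.2 :=
  .ite (measurableSet_le (by fun_prop) measurable_const)
    (((hu.comp_measurable measurable_fst).edist
      (hu.comp_measurable measurable_snd)).measurable.pow_const p) measurable_const

lemma measure_mul_lintegral_le_truncatedEnergy_ediam {μ : Measure X} {p : ℝ}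
    {D Ω : Set X} {u : X → F} {a : F}
    (hD : MeasurableSet D) (hΩD : Ω ⊆ D) (hΩ : u =ᵐ[μ.restrict Ω] fun _ ↦ a) :
    μ Ω * ∫⁻ x in D, edist (u x) a ^ p ∂μ ≤ truncatedEnergy μ p D u (ediam D) := by
  refine (lintegral_const_mul_le _ _).trans <| setLIntegral_mono' hD fun x hx ↦ ?_
  have h_eq : (fun _ ↦ edist (u x) a ^ p) =ᵐ[μ.restrict Ω] truncatedDiff p u (ediam D) x := by
    filter_upwards [hΩ, ae_restrict_of_ae_restrict_of_subset hΩD (ae_restrict_mem hD)]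
      with y hy hyD
    rw [truncatedDiff, if_pos (edist_le_ediam_of_mem hx hyD), hy]
  calc μ Ω * edist (u x) a ^ p = ∫⁻ y in Ω, truncatedDiff p u (ediam D) x y ∂μ := by
        rw [← lintegral_congr_ae h_eq, setLIntegral_const, mul_comm]
    _ ≤ ∫⁻ y in D, truncatedDiff p u (ediam D) x y ∂μ := lintegral_mono_set hΩD

end TruncatedEnergy

variable {E F : Type*} [NormedAddCommGroup E] [NormedSpace ℝ E] [PseudoEMetricSpace F]

lemma truncatedDiff_le_midpoint {p : ℝ} (hp : 1 ≤ p) (u : E → F) (r : ℝ≥0∞) (x y : E) :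
    truncatedDiff p u r x y ≤ 2 ^ (p - 1) *
      (truncatedDiff p u (r / 2) x (midpoint ℝ x y) +
        truncatedDiff p u (r / 2) y (midpoint ℝ x y)) := by
  have hx := edist_left_midpoint x y
  have hy : edist y (midpoint ℝ x y) = edist x y / 2 := by
    rw [midpoint_comm, edist_left_midpoint, edist_comm]
  by_cases h : edist x y ≤ r
  · have h_half : edist x y / 2 ≤ r / 2 := by gcongr
    simp only [truncatedDiff, hx, hy, if_pos h, if_pos h_half]
    calc edist (u x) (u y) ^ p
        ≤ (edist (u x) (u (midpoint ℝ x y)) + edist (u y) (u (midpoint ℝ x y))) ^ p := by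
          gcongr
          exact edist_triangle_right _ _ _
      _ ≤ _ := ENNReal.rpow_add_le_mul_rpow_add_rpow _ _ hp
  · simp [truncatedDiff, h]

lemma tsum_mul_truncatedDiff_le {X : Type*} [MetricSpace X] {p α : ℝ} (hp : 0 < p) (ρ : ℝ≥0∞)
    (u : X → F) {x y : X} (hα : x ≠ y → 1 ≤ α) :
    ∑' k : ℕ, ((2 : ℝ≥0∞) ^ α) ^ k * truncatedDiff p u (ρ / 2 ^ k) x y ≤
      2 * ρ ^ α * (edist (u x) (u y) ^ p / edist x y ^ α) := by
  rcases eq_or_ne x y with rfl | hxy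
  · simp [truncatedDiff, hp]
  have hα0 : 0 ≤ α := zero_le_one.trans (hα hxy)
  have hb : (2 : ℝ≥0∞) ≤ 2 ^ α := by
    simpa using ENNReal.rpow_le_rpow_of_exponent_le one_le_two (hα hxy)
  have h_scale (k : ℕ) (hk : edist x y ≤ ρ / 2 ^ k) :
      ((2 : ℝ≥0∞) ^ α) ^ k ≤ (ρ / edist x y) ^ α := by
    rw [← ENNReal.rpow_natCast, ← ENNReal.rpow_mul, mul_comm, ENNReal.rpow_mul,
      ENNReal.rpow_natCast]
    gcongr
    rw [ENNReal.le_div_iff_mul_le (.inl (edist_pos.2 hxy).ne') (.inl (edist_ne_top x y)), mul_comm]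
    exact ENNReal.mul_le_of_le_div hk
  refine ENNReal.tsum_le_of_sum_range_le fun N ↦ ?_
  calc ∑ k ∈ Finset.range N, ((2 : ℝ≥0∞) ^ α) ^ k * truncatedDiff p u (ρ / 2 ^ k) x y
      = (∑ k ∈ Finset.range N with edist x y ≤ ρ / 2 ^ k, ((2 : ℝ≥0∞) ^ α) ^ k) *
          edist (u x) (u y) ^ p := by
        simp only [truncatedDiff, mul_ite, mul_zero, Finset.sum_filter, Finset.sum_mul, ite_mul,
          zero_mul]
    _ ≤ 2 * (ρ / edist x y) ^ α * edist (u x) (u y) ^ p := by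
        gcongr
        exact sum_pow_le_two_mul hb fun k hk ↦ h_scale k (Finset.mem_filter.1 hk).2
    _ = 2 * ρ ^ α * (edist (u x) (u y) ^ p / edist x y ^ α) := by
        rw [ENNReal.div_rpow_of_nonneg _ _ hα0]
        simp only [div_eq_mul_inv]
        ring

variable [MeasurableSpace E]

/-- The `p`-th power of the Gagliardo seminorm `[u]_{W^{s,p}(D)}` with respect to `μ`, for maps
into a metric space, as an extended nonnegative number. The diagonal does not contribute, since
`0 / a = 0` in `ℝ≥0∞` for every `a`. -/
def gagliardoEnergy (μ : Measure E) (s p : ℝ) (D : Set E) (u : E → F) : ℝ≥0∞ :=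
  ∫⁻ x in D, ∫⁻ y in D,
    edist (u x) (u y) ^ p / edist x y ^ (Module.finrank ℝ E + s * p) ∂μ ∂μ

section Energy

variable [FiniteDimensional ℝ E] [BorelSpace E] {μ : Measure E} {p s : ℝ} {D : Set E} {u : E → F}

lemma tsum_mul_truncatedEnergy_le [SFinite μ] (hp : 0 < p) (hs : 0 ≤ s) (ρ : ℝ≥0∞)
    (hu : StronglyMeasurable u) :
    ∑' k : ℕ, ((2 : ℝ≥0∞) ^ (Module.finrank ℝ E + s * p)) ^ k *
        truncatedEnergy μ p D u (ρ / 2 ^ k) ≤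
      2 * ρ ^ (Module.finrank ℝ E + s * p) * gagliardoEnergy μ s p D u := by
  set α : ℝ := Module.finrank ℝ E + s * p
  -- In dimension `0` there are no off-diagonal pairs, so the weights `2 ^ (α k)` always grow at
  -- least like `2 ^ k`, and the bound does not degenerate as `s` tends to `0`.
  have hα {x y : E} (hxy : x ≠ y) : 1 ≤ α := by
    have : Nontrivial E := ⟨x, y, hxy⟩
    have h_dim : (1 : ℝ) ≤ Module.finrank ℝ E := by exact_mod_cast Module.finrank_pos (R := ℝ)
    exact le_add_of_le_of_nonneg h_dim (by positivity)
  have h_meas (k : ℕ) : Measurable fun z : E × E ↦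
      ((2 : ℝ≥0∞) ^ α) ^ k * truncatedDiff p u (ρ / 2 ^ k) z.1 z.2 :=
    (measurable_truncatedDiff p hu _).const_mul _
  have h_quot : Measurable fun z : E × E ↦
      edist (u z.1) (u z.2) ^ p / edist z.1 z.2 ^ α :=
    (((hu.comp_measurable measurable_fst).edist
      (hu.comp_measurable measurable_snd)).measurable.pow_const p).div (by fun_prop)
  have h_coeff (k : ℕ) : ((2 : ℝ≥0∞) ^ α) ^ k ≠ ⊤ := by finiteness
  calc ∑' k : ℕ, ((2 : ℝ≥0∞) ^ α) ^ k * truncatedEnergy μ p D u (ρ / 2 ^ k)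
      = ∑' k : ℕ, ∫⁻ x in D, ∫⁻ y in D,
          (2 ^ α) ^ k * truncatedDiff p u (ρ / 2 ^ k) x y ∂μ ∂μ := by
        simp only [truncatedEnergy, ← lintegral_const_mul' _ _ (h_coeff _)]
    _ = ∫⁻ x in D, ∫⁻ y in D,
          ∑' k : ℕ, (2 ^ α) ^ k * truncatedDiff p u (ρ / 2 ^ k) x y ∂μ ∂μ := by
        rw [← lintegral_tsum fun k ↦ (h_meas k).lintegral_prod_right'.aemeasurable]
        refine lintegral_congr fun x ↦ ?_
        exact (lintegral_tsum fun k ↦ ((h_meas k).comp measurable_prodMk_left).aemeasurable).symm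
    _ ≤ ∫⁻ x in D, ∫⁻ y in D,
          2 * ρ ^ α * (edist (u x) (u y) ^ p / edist x y ^ α) ∂μ ∂μ :=
        lintegral_mono fun x ↦ lintegral_mono fun y ↦ tsum_mul_truncatedDiff_le hp ρ u hα
    _ = 2 * ρ ^ α * gagliardoEnergy μ s p D u := by
        rw [gagliardoEnergy, ← lintegral_const_mul _ h_quot.lintegral_prod_right']
        exact lintegral_congr fun x ↦ lintegral_const_mul _ (h_quot.comp measurable_prodMk_left)

variable [μ.IsAddHaarMeasure]

lemma truncatedEnergy_le_half (hp : 1 ≤ p) (hD : MeasurableSet D) (hD_conv : Convex ℝ D)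
    (hu : StronglyMeasurable u) (r : ℝ≥0∞) :
    truncatedEnergy μ p D u r ≤
      2 ^ (Module.finrank ℝ E + p) * truncatedEnergy μ p D u (r / 2) := by
  have h_const : (2 : ℝ≥0∞) ^ (p - 1) * 2 ^ (Module.finrank ℝ E + 1) =
      2 ^ (Module.finrank ℝ E + p) := by
    rw [← ENNReal.rpow_natCast, ← ENNReal.rpow_add _ _ two_ne_zero (by simp)]
    congr 1
    push_cast
    ring
  set K := truncatedDiff p u (r / 2)
  calc truncatedEnergy μ p D u r
      ≤ ∫⁻ x in D, ∫⁻ y in D,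
          2 ^ (p - 1) * (K x (midpoint ℝ x y) + K y (midpoint ℝ x y)) ∂μ ∂μ :=
        lintegral_mono fun x ↦ lintegral_mono fun y ↦ truncatedDiff_le_midpoint hp u r x y
    _ = 2 ^ (p - 1) *
          ∫⁻ x in D, ∫⁻ y in D, (K x (midpoint ℝ x y) + K y (midpoint ℝ x y)) ∂μ ∂μ := by
        have h_ne_top : (2 : ℝ≥0∞) ^ (p - 1) ≠ ⊤ := by finiteness
        simp only [lintegral_const_mul' _ _ h_ne_top]
    _ ≤ 2 ^ (p - 1) *
          (2 ^ (Module.finrank ℝ E + 1) * truncatedEnergy μ p D u (r / 2)) := by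
        gcongr
        exact setLIntegral_midpoint_add_le hD hD_conv (measurable_truncatedDiff p hu _)
    _ = 2 ^ (Module.finrank ℝ E + p) * truncatedEnergy μ p D u (r / 2) := by
        rw [← mul_assoc, h_const]

lemma truncatedEnergy_le_pow_mul (hp : 1 ≤ p) (hD : MeasurableSet D) (hD_conv : Convex ℝ D)
    (hu : StronglyMeasurable u) (r : ℝ≥0∞) (k : ℕ) :
    truncatedEnergy μ p D u r ≤
      (2 ^ (Module.finrank ℝ E + p)) ^ k * truncatedEnergy μ p D u (r / 2 ^ k) := by
  induction k with
  | zero => simp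
  | succ k ih =>
    calc truncatedEnergy μ p D u r
        ≤ (2 ^ (Module.finrank ℝ E + p)) ^ k * truncatedEnergy μ p D u (r / 2 ^ k) := ih
      _ ≤ (2 ^ (Module.finrank ℝ E + p)) ^ k *
          (2 ^ (Module.finrank ℝ E + p) * truncatedEnergy μ p D u (r / 2 ^ k / 2)) := by
        gcongr
        exact truncatedEnergy_le_half hp hD hD_conv hu _
      _ = (2 ^ (Module.finrank ℝ E + p)) ^ (k + 1) * truncatedEnergy μ p D u (r / 2 ^ (k + 1)) := by
        rw [← mul_assoc, ← pow_succ, pow_succ 2 k, div_eq_mul_inv, div_eq_mul_inv, div_eq_mul_inv,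
          ENNReal.mul_inv (by simp) (by simp), mul_assoc]

lemma truncatedEnergy_le_gagliardoEnergy (hp : 1 ≤ p) (hs : 0 ≤ s) (hs1 : s < 1)
    (hD : MeasurableSet D) (hD_conv : Convex ℝ D) (hu : StronglyMeasurable u) (ρ : ℝ≥0∞) :
    truncatedEnergy μ p D u ρ ≤
      ENNReal.ofReal ((1 - s) * p) * (2 * ρ ^ (Module.finrank ℝ E + s * p)) *
        gagliardoEnergy μ s p D u := by
  set t : ℝ := (1 - s) * p
  have ht : 0 < t := mul_pos (sub_pos.2 hs1) (zero_lt_one.trans_le hp)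
  set q : ℝ≥0∞ := 2 ^ (-t) with hq
  have hq1 : q < 1 := ENNReal.rpow_lt_one_of_one_lt_of_neg (by norm_num) (by linarith)
  have h_ratio : q * 2 ^ (Module.finrank ℝ E + p) = 2 ^ (Module.finrank ℝ E + s * p) := by
    rw [hq, ← ENNReal.rpow_add _ _ two_ne_zero (by simp)]
    congr 1
    ring
  have h_geom : (1 - q)⁻¹ * truncatedEnergy μ p D u ρ ≤
      2 * ρ ^ (Module.finrank ℝ E + s * p) * gagliardoEnergy μ s p D u := by
    calc (1 - q)⁻¹ * truncatedEnergy μ p D u ρ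
        = ∑' k : ℕ, q ^ k * truncatedEnergy μ p D u ρ := by
          rw [ENNReal.tsum_mul_right, ENNReal.tsum_geometric]
      _ ≤ ∑' k : ℕ, (2 ^ (Module.finrank ℝ E + s * p)) ^ k *
            truncatedEnergy μ p D u (ρ / 2 ^ k) := by
          refine ENNReal.tsum_le_tsum fun k ↦ ?_
          rw [← h_ratio, mul_pow, mul_assoc]
          gcongr
          exact truncatedEnergy_le_pow_mul hp hD hD_conv hu ρ k
      _ ≤ _ := tsum_mul_truncatedEnergy_le (by linarith) hs ρ hu
  calc truncatedEnergy μ p D u ρ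
      ≤ (1 - q) * (2 * ρ ^ (Module.finrank ℝ E + s * p) * gagliardoEnergy μ s p D u) := by
        rw [mul_comm, ← div_eq_mul_inv] at h_geom
        rw [mul_comm]
        exact (ENNReal.div_le_iff (tsub_pos_of_lt hq1).ne' (by finiteness)).1 h_geom
    _ ≤ _ := by
        rw [mul_assoc (ENNReal.ofReal t)]
        gcongr
        exact one_sub_two_rpow_neg_le ht.le

theorem measure_mul_lintegral_le_gagliardoEnergy (hp : 1 ≤ p) (hs : 0 ≤ s) (hs1 : s < 1)
    (hD : MeasurableSet D) (hD_conv : Convex ℝ D) (hu : StronglyMeasurable u) {Ω : Set E} {a : F}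
    (hΩD : Ω ⊆ D) (hΩ : u =ᵐ[μ.restrict Ω] fun _ ↦ a) :
    μ Ω * ∫⁻ x in D, edist (u x) a ^ p ∂μ ≤
      ENNReal.ofReal ((1 - s) * p) * (2 * ediam D ^ (Module.finrank ℝ E + s * p)) *
        gagliardoEnergy μ s p D u :=
  (measure_mul_lintegral_le_truncatedEnergy_ediam hD hΩD hΩ).trans
    (truncatedEnergy_le_gagliardoEnergy hp hs hs1 hD hD_conv hu _)

lemma measure_unitBall_mul_lintegral_ball_le (hp : 1 ≤ p) (hs : 0 ≤ s) (hs1 : s < 1)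
    (hu : StronglyMeasurable u) {γ R : ℝ} (hR : 0 < R) {x₀ : E} {Ω : Set E} {a : F}
    (hΩ_sub : Ω ⊆ ball x₀ R) (hΩ_fat : ENNReal.ofReal γ * μ (ball x₀ R) ≤ μ Ω)
    (hΩ : u =ᵐ[μ.restrict Ω] fun _ ↦ a) :
    ENNReal.ofReal γ * μ (ball 0 1) * ∫⁻ x in ball x₀ R, edist (u x) a ^ p ∂μ ≤
      ENNReal.ofReal (2 ^ (Module.finrank ℝ E + p + 1) * p * (1 - s) * R ^ (s * p)) *
        gagliardoEnergy μ s p (ball x₀ R) u := by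
  set n := Module.finrank ℝ E
  have hp0 : 0 ≤ p := by linarith
  have : 0 ≤ 1 - s := by linarith
  have h_ball : μ (ball x₀ R) = ENNReal.ofReal (R ^ n) * μ (ball 0 1) :=
    μ.addHaar_ball_of_pos x₀ hR
  have h_pos : ENNReal.ofReal (R ^ n) ≠ 0 := by simpa using pow_pos hR n
  refine (ENNReal.mul_le_mul_iff_right h_pos ENNReal.ofReal_ne_top).1 ?_
  calc ENNReal.ofReal (R ^ n) * (ENNReal.ofReal γ * μ (ball 0 1) *
          ∫⁻ x in ball x₀ R, edist (u x) a ^ p ∂μ)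
      = ENNReal.ofReal γ * μ (ball x₀ R) * ∫⁻ x in ball x₀ R, edist (u x) a ^ p ∂μ := by
        rw [h_ball]
        ring
    _ ≤ μ Ω * ∫⁻ x in ball x₀ R, edist (u x) a ^ p ∂μ := by gcongr
    _ ≤ ENNReal.ofReal ((1 - s) * p) * (2 * ediam (ball x₀ R) ^ (n + s * p)) *
          gagliardoEnergy μ s p (ball x₀ R) u :=
        measure_mul_lintegral_le_gagliardoEnergy hp hs hs1 measurableSet_ball (convex_ball x₀ R)
          hu hΩ_sub hΩ
    _ ≤ ENNReal.ofReal ((1 - s) * p) *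
          ENNReal.ofReal (2 ^ (n + p + 1) * R ^ n * R ^ (s * p)) *
          gagliardoEnergy μ s p (ball x₀ R) u := by
        gcongr
        exact two_mul_ediam_ball_rpow_le x₀ hR n hp0 hs hs1.le
    _ = _ := by
        rw [← mul_assoc, ← ENNReal.ofReal_mul (by positivity),
          ← ENNReal.ofReal_mul (by positivity)]
        ring_nf

end Energy

lemma edist_zero_rpow_eq_ofReal_abs {p : ℝ} (hp : 0 ≤ p) (t : ℝ) :
    edist t 0 ^ p = ENNReal.ofReal (|t| ^ p) := by
  rw [edist_dist, Real.dist_0_eq_abs, ENNReal.ofReal_rpow_of_nonneg (abs_nonneg t) hp]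

lemma gagliardoE_eq_gagliardoEnergy {n : ℕ} {s p : ℝ} (hp : 0 < p)
    (D : Set (EuclideanSpace ℝ (Fin n))) (u : EuclideanSpace ℝ (Fin n) → ℝ) :
    gagliardoE n s p D u = gagliardoEnergy volume s p D u := by
  unfold gagliardoE gagliardoEnergy
  refine lintegral_congr fun x ↦ lintegral_congr fun y ↦ ?_
  rcases eq_or_ne x y with rfl | hxy
  · simp [hp, hp.ne']
  · have h_dist : 0 < dist x y := dist_pos.2 hxy
    rw [finrank_euclideanSpace_fin, ENNReal.ofReal_div_of_pos (Real.rpow_pos_of_pos h_dist _),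
      edist_dist, edist_dist, Real.dist_eq, ENNReal.ofReal_rpow_of_nonneg (by positivity) hp.le,
      ENNReal.ofReal_rpow_of_pos h_dist]

theorem fractional_poincare_fat_zero_set_general {E F : Type*} [NormedAddCommGroup E]
    [NormedSpace ℝ E] [FiniteDimensional ℝ E] [MeasurableSpace E] [BorelSpace E]
    [PseudoEMetricSpace F] (μ : Measure E) [μ.IsAddHaarMeasure] {p γ : ℝ} (hp : 1 ≤ p)
    (hγ : 0 < γ) :
    ∃ c : ℝ, 1 ≤ c ∧
      ∀ s : ℝ, 0 ≤ s → s < 1 →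
        ∀ (R : ℝ) (x₀ : E) (u : E → F) (a : F) (Ω : Set E),
          0 < R → StronglyMeasurable u → Ω ⊆ ball x₀ R →
          ENNReal.ofReal γ * μ (ball x₀ R) ≤ μ Ω →
          u =ᵐ[μ.restrict Ω] (fun _ ↦ a) →
          ∫⁻ x in ball x₀ R, edist (u x) a ^ p ∂μ ≤
            ENNReal.ofReal (c * (1 - s) * R ^ (s * p)) *
              gagliardoEnergy μ s p (ball x₀ R) u := by
  set m : ℝ := γ * μ.real (ball 0 1)
  set K : ℝ := 2 ^ (Module.finrank ℝ E + p + 1) * p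
  have hm : 0 < m := mul_pos hγ <|
    ENNReal.toReal_pos (measure_ball_pos μ 0 one_pos).ne' measure_ball_lt_top.ne
  have hmE : ENNReal.ofReal m = ENNReal.ofReal γ * μ (ball 0 1) := by
    rw [ENNReal.ofReal_mul hγ.le, ofReal_measureReal measure_ball_lt_top.ne]
  have hK : K ≤ m * max 1 (K / m) := by
    rw [← div_le_iff₀' hm]
    exact le_max_right _ _
  refine ⟨max 1 (K / m), le_max_left _ _, ?_⟩
  intro s hs hs1 R x₀ u a Ω hR hu hΩ_sub hΩ_fat hΩ
  have : 0 ≤ 1 - s := by linarith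
  refine (ENNReal.mul_le_mul_iff_right (ENNReal.ofReal_pos.2 hm).ne' ENNReal.ofReal_ne_top).1 ?_
  calc ENNReal.ofReal m * ∫⁻ x in ball x₀ R, edist (u x) a ^ p ∂μ
      ≤ ENNReal.ofReal (K * (1 - s) * R ^ (s * p)) * gagliardoEnergy μ s p (ball x₀ R) u := by
        rw [hmE]
        exact measure_unitBall_mul_lintegral_ball_le hp hs hs1 hu hR hΩ_sub hΩ_fat hΩ
    _ ≤ ENNReal.ofReal (m * max 1 (K / m) * (1 - s) * R ^ (s * p)) *
          gagliardoEnergy μ s p (ball x₀ R) u := by gcongr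
    _ = _ := by
        rw [← mul_assoc, ← ENNReal.ofReal_mul hm.le]
        ring_nf

theorem fractional_poincare_fat_zero_set (n : ℕ) (p s₀ γ : ℝ) (hp : 1 ≤ p) (hs₀ : 0 < s₀)
    (hγ₁ : 0 < γ) (hγ₂ : γ ≤ 1) :
    ∃ c : ℝ, 1 ≤ c ∧
      ∀ s : ℝ, s₀ ≤ s → s < 1 →
        ∀ (R : ℝ) (x₀ : EuclideanSpace ℝ (Fin n)) (u : EuclideanSpace ℝ (Fin n) → ℝ),
          0 < R → Measurable u →
          (∫⁻ x in ball x₀ R, ENNReal.ofReal (|u x| ^ p)) < ⊤ →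
          gagliardoE n s p (ball x₀ R) u < ⊤ →
          (∃ Ω₀ : Set (EuclideanSpace ℝ (Fin n)), MeasurableSet Ω₀ ∧ Ω₀ ⊆ ball x₀ R ∧
            ENNReal.ofReal γ * volume (ball x₀ R) ≤ volume Ω₀ ∧
            ∀ᵐ x, x ∈ Ω₀ → u x = 0) →
          (∫⁻ x in ball x₀ R, ENNReal.ofReal (|u x| ^ p)) ≤
            ENNReal.ofReal (c * (1 - s) * R ^ (s * p)) * gagliardoE n s p (ball x₀ R) u := by
  obtain ⟨c, hc, h⟩ := fractional_poincare_fat_zero_set_general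
    (E := EuclideanSpace ℝ (Fin n)) (F := ℝ) volume hp hγ₁
  refine ⟨c, hc, fun s hs hs1 R x₀ u hR hu _ _ ⟨Ω, hΩ, hΩ_sub, hΩ_fat, hz⟩ ↦ ?_⟩
  have hp0 : 0 < p := zero_lt_one.trans_le hp
  simpa only [gagliardoE_eq_gagliardoEnergy hp0, edist_zero_rpow_eq_ofReal_abs hp0.le] using
    h s (hs₀.le.trans hs) hs1 R x₀ u 0 Ω hR hu.stronglyMeasurable hΩ_sub hΩ_fat
      ((ae_restrict_iff' hΩ).2 hz)
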